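/- Let n ≥ 1. Then the following identity of polynomials in ℚ[t] holds: n! · Σ_{π ∈ 𝔦_n} t^{des(π)+1} = Σ_{k=1}^{n} b_{n,k} · A_k(t) (1−t)^{n−k}, where b_{n,k} is the number of permutations π of [n] such that π² has exactly k cycles (counting fixed points as cycles of length 1). -/

import Mathlib

open scoped Classical

noncomputable section

def oneLine (n : ℕ) (π : Equiv.Perm (Fin n)) (i : ℕ) : ℕ :=
  if h : 1 ≤ i ∧ i ≤ n then (π ⟨i - 1, by omega⟩).val + 1 else 0

def des (n : ℕ) (π : Equiv.Perm (Fin n)) : ℕ :=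
  ((Finset.Icc 1 (n - 1)).filter fun i => oneLine n π (i + 1) < oneLine n π i).card

def pk (n : ℕ) (π : Equiv.Perm (Fin n)) : ℕ :=
  ((Finset.Icc 2 (n - 1)).filter fun i =>
    oneLine n π (i - 1) < oneLine n π i ∧ oneLine n π (i + 1) < oneLine n π i).card

def lpk (n : ℕ) (π : Equiv.Perm (Fin n)) : ℕ :=
  ((Finset.Icc 1 (n - 1)).filter fun i =>
    oneLine n π (i - 1) < oneLine n π i ∧ oneLine n π (i + 1) < oneLine n π i).card

def pval (n : ℕ) (π : Equiv.Perm (Fin n)) : ℕ :=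
  ((Finset.Icc 2 (n - 1)).filter fun i =>
    oneLine n π i < oneLine n π (i - 1) ∧ oneLine n π i < oneLine n π (i + 1)).card

def udr (n : ℕ) (π : Equiv.Perm (Fin n)) : ℕ := lpk n π + pval n π + 1

def fullCycleType (n : ℕ) (π : Equiv.Perm (Fin n)) : Multiset ℕ :=
  π.cycleType + Multiset.replicate (n - π.support.card) 1

def numCycles (n : ℕ) (π : Equiv.Perm (Fin n)) : ℕ := Multiset.card (fullCycleType n π)

def numOddCycles (n : ℕ) (π : Equiv.Perm (Fin n)) : ℕ :=
  Multiset.card ((fullCycleType n π).filter fun p => p % 2 = 1)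

def IsCyclicPerm (n : ℕ) (π : Equiv.Perm (Fin n)) : Prop :=
  fullCycleType n π = {n}

def cyclicSet (n : ℕ) : Finset (Equiv.Perm (Fin n)) :=
  Finset.univ.filter fun π => IsCyclicPerm n π

def invSet (n : ℕ) : Finset (Equiv.Perm (Fin n)) :=
  Finset.univ.filter fun π => π ^ 2 = 1

def eulerianA (m : ℕ) : Polynomial ℚ :=
  ∑ π : Equiv.Perm (Fin m), Polynomial.X ^ (des m π + 1)

def peakP (m : ℕ) : Polynomial ℚ :=
  ∑ π : Equiv.Perm (Fin m), Polynomial.X ^ (pk m π + 1)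

def leftPeakP (m : ℕ) : Polynomial ℚ :=
  ∑ π : Equiv.Perm (Fin m), Polynomial.X ^ (lpk m π)

def cnk (n k : ℕ) : ℕ :=
  (Finset.univ.filter fun π : Equiv.Perm (Fin n) =>
    (∀ p ∈ fullCycleType n π, ¬ (4 ∣ p)) ∧ numCycles n (π ^ 2) = k).card

def bnk (n k : ℕ) : ℕ :=
  (Finset.univ.filter fun π : Equiv.Perm (Fin n) => numCycles n (π ^ 2) = k).card

def dnk (n k : ℕ) : ℕ :=
  (Finset.univ.filter fun π : Equiv.Perm (Fin n) => numOddCycles n (π ^ 2) = k).card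

/-!
Divided by `(1 - t) ^ (n + 1)`, the descent polynomial of a set `s` of permutations of `[n]` is the
generating function in `r` of the number of words of length `n` over `r` letters that are sorted by
an element of `s`: once sorted, such a word increases weakly, and strictly at the descents.
For `s = S_k` these are all `r ^ k` words, so the theorem says that `n!` times the number of
words sorted by an involution is `∑ σ, r ^ cyc(σ²)`.
Now `r ^ cyc(σ²)` counts the words fixed by `σ²`, that is, the biwords whose rows `σ` exchanges, and
summing over `σ` counts, by orbit counting, `n!` times the biwords with sorted columns that are
symmetric up to rearranging the columns. The bottom row of such a biword is sorted by an involution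
and determines it.
-/

open Equiv (Perm)
open Equiv.Perm (SameCycle)
open Tuple (sort)
open scoped Polynomial PowerSeries

section Cycles

variable {α β : Type*}

theorem apply_eq_of_sameCycle {σ : Perm α} {w : α → β} (hw : w ∘ σ = w) {x y : α}
    (hxy : σ.SameCycle x y) : w x = w y := by
  obtain ⟨k, rfl⟩ := hxy
  induction k generalizing x with
  | zero => rfl
  | succ k ih =>
    rw [zpow_add_one, Equiv.Perm.mul_apply, ← ih]
    exact (congrFun hw x).symm
  | pred k ih =>
    rw [zpow_sub_one, Equiv.Perm.mul_apply, ← ih]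
    simpa using congrFun hw (σ⁻¹ x)

/-- Words that are invariant under `σ` are the same as words on the set of cycles of `σ`. -/
def invariantWordEquiv (σ : Perm α) :
    {w : α → β // w ∘ σ = w} ≃ (Quotient (SameCycle.setoid σ) → β) where
  toFun w := Quotient.lift w.1 fun _ _ => apply_eq_of_sameCycle w.2
  invFun u := ⟨fun x => u ⟦x⟧, funext fun x => congrArg u <|
    Quotient.sound (Equiv.Perm.sameCycle_apply_left.2 (SameCycle.refl σ x))⟩
  left_inv _ := rfl
  right_inv _ := funext fun q => q.inductionOn fun _ => rfl

variable [Fintype α] [DecidableEq α]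

/-- The cycle of `σ` through `x`: the corresponding cycle factor of `σ` if `x` is moved, and the
point `x` itself if it is fixed, as fixed points have no cycle factor of their own. -/
def cycleThrough (σ : Perm α) (x : α) : Perm α ⊕ α :=
  if x ∈ σ.support then .inl (σ.cycleOf x) else .inr x

theorem cycleThrough_eq_iff {σ : Perm α} {x y : α} :
    cycleThrough σ x = cycleThrough σ y ↔ σ.SameCycle x y := by
  have mem_support_iff (h : σ.SameCycle x y) : x ∈ σ.support ↔ y ∈ σ.support := by
    simpa only [Equiv.Perm.mem_support] using h.apply_eq_self_iff.not
  unfold cycleThrough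
  split_ifs with hx hy hy
  · rw [Sum.inl.injEq, Equiv.Perm.sameCycle_iff_cycleOf_eq_of_mem_support hx hy]
  · exact iff_of_false (by simp) fun h => hy ((mem_support_iff h).1 hx)
  · exact iff_of_false (by simp) fun h => hx ((mem_support_iff h).2 hy)
  · rw [Sum.inr.injEq]
    exact ⟨fun h => h ▸ SameCycle.refl σ x,
      fun h => h.eq_of_left (Equiv.Perm.notMem_support.1 hx)⟩

theorem range_cycleThrough (σ : Perm α) :
    Set.range (cycleThrough σ) = (σ.cycleFactorsFinset.disjSum σ.supportᶜ : Finset _) := by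
  ext c
  simp only [Set.mem_range, Finset.mem_coe]
  constructor
  · rintro ⟨x, rfl⟩
    by_cases hx : x ∈ σ.support
    · simp [cycleThrough, hx, Equiv.Perm.cycleOf_mem_cycleFactorsFinset_iff]
    · simp [cycleThrough, hx]
  · rcases c with c | x
    · intro hc
      rw [Finset.inl_mem_disjSum] at hc
      obtain ⟨x, hx⟩ := (Equiv.Perm.mem_cycleFactorsFinset_iff.1 hc).1.nonempty_support
      have hxσ : x ∈ σ.support := Equiv.Perm.mem_cycleFactorsFinset_support_le hc hx
      exact ⟨x, by rw [cycleThrough, if_pos hxσ, Equiv.Perm.cycle_is_cycleOf hx hc]⟩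
    · intro hx
      rw [Finset.inr_mem_disjSum, Finset.mem_compl] at hx
      exact ⟨x, if_neg hx⟩

theorem card_quotient_sameCycle (σ : Perm α) :
    Nat.card (Quotient (SameCycle.setoid σ)) = Multiset.card σ.partition.parts := by
  have ker_eq : SameCycle.setoid σ = Setoid.ker (cycleThrough σ) :=
    Setoid.ext fun _ _ => cycleThrough_eq_iff.symm
  rw [ker_eq, Nat.card_congr (Setoid.quotientKerEquivRange _), range_cycleThrough,
    Nat.card_coe_set_eq, Set.ncard_coe_finset, Finset.card_disjSum, Finset.card_compl,
    Equiv.Perm.parts_partition, Multiset.card_add, Multiset.card_replicate,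
    Equiv.Perm.cycleType_def, Multiset.card_map, Finset.card_val]

theorem numCycles_eq_card_quotient (n : ℕ) (σ : Perm (Fin n)) :
    numCycles n σ = Nat.card (Quotient (SameCycle.setoid σ)) := by
  rw [card_quotient_sameCycle, Equiv.Perm.parts_partition, Fintype.card_fin, numCycles,
    fullCycleType]

theorem numCycles_mem_Icc {n : ℕ} (hn : 1 ≤ n) (σ : Perm (Fin n)) :
    numCycles n σ ∈ Finset.Icc 1 n := by
  rw [numCycles_eq_card_quotient, Finset.mem_Icc]
  have : Nonempty (Quotient (SameCycle.setoid σ)) := ⟨Quotient.mk _ ⟨0, hn⟩⟩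
  exact ⟨Nat.card_pos, by
    simpa using Nat.card_le_card_of_surjective (Quotient.mk (SameCycle.setoid σ))
      Quotient.mk_surjective⟩

theorem card_invariant_words (n r : ℕ) (σ : Perm (Fin n)) :
    Nat.card {w : Fin n → Fin r // w ∘ σ = w} = r ^ numCycles n σ := by
  rw [Nat.card_congr (invariantWordEquiv σ), Nat.card_fun, Nat.card_fin, numCycles_eq_card_quotient]

theorem sum_pow_numCycles_sq {n : ℕ} (hn : 1 ≤ n) (r : ℕ) :
    ∑ σ : Perm (Fin n), r ^ numCycles n (σ ^ 2) = ∑ k ∈ Finset.Icc 1 n, bnk n k * r ^ k := by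
  rw [← Finset.sum_fiberwise_of_maps_to (t := Finset.Icc 1 n)
    fun σ _ => numCycles_mem_Icc hn (σ ^ 2)]
  refine Finset.sum_congr rfl fun k _ => ?_
  rw [Finset.sum_congr rfl fun σ hσ => congrArg (r ^ ·) (Finset.mem_filter.1 hσ).2,
    Finset.sum_const, smul_eq_mul, bnk]

end Cycles

section Words

variable {n : ℕ} {α : Type*} [LinearOrder α]

/-- The bijection behind the orbit count for the action of `Perm (Fin n)` on words: the pairs
`(σ, g)` with `g ∘ σ = φ ∘ g` correspond to the pairs of an arbitrary permutation, which is chosen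
to sort `g`, and a sorted word (an orbit) that `φ` maps to a rearrangement of itself. -/
def compPermEqEquiv (φ : α → α) :
    {p : Perm (Fin n) × (Fin n → α) // p.2 ∘ p.1 = φ ∘ p.2} ≃
      Perm (Fin n) × {f : Fin n → α // (φ ∘ f) ∘ sort (φ ∘ f) = f} where
  toFun p := (p.1.1 * sort (φ ∘ p.1.2), ⟨p.1.2 ∘ (p.1.1 * sort (φ ∘ p.1.2) : Perm (Fin n)), by
    rw [← Function.comp_assoc φ, Tuple.comp_perm_comp_sort_eq_comp_sort, Equiv.Perm.coe_mul,
      ← Function.comp_assoc p.1.2, p.2]⟩)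
  invFun q := ⟨(q.1 * (sort (φ ∘ q.2.1 ∘ q.1.symm))⁻¹, q.2.1 ∘ q.1.symm), by
    have hsort : (φ ∘ q.2.1 ∘ q.1.symm) ∘ sort (φ ∘ q.2.1 ∘ q.1.symm) = q.2.1 :=
      Tuple.comp_perm_comp_sort_eq_comp_sort.trans q.2.2
    funext i
    simpa using (congrFun hsort ((sort (φ ∘ q.2.1 ∘ q.1.symm)).symm i)).symm⟩
  left_inv p := by
    have hg : (p.1.2 ∘ ⇑(p.1.1 * sort (φ ∘ p.1.2))) ∘ (p.1.1 * sort (φ ∘ p.1.2)).symm = p.1.2 :=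
      funext fun i => congrArg p.1.2 (Equiv.apply_symm_apply _ i)
    exact Subtype.ext (Prod.ext (by simp only [hg, mul_inv_cancel_right]) hg)
  right_inv q := by
    refine Prod.ext (inv_mul_cancel_right _ _) (Subtype.ext ?_)
    funext i
    simp

theorem sum_card_comp_perm_eq [Finite α] (φ : α → α) :
    ∑ σ : Perm (Fin n), Nat.card {g : Fin n → α // g ∘ σ = φ ∘ g} =
      n.factorial * Nat.card {f : Fin n → α // (φ ∘ f) ∘ sort (φ ∘ f) = f} := by
  rw [← Nat.card_sigma, ← Nat.card_congr (Equiv.subtypeProdEquivSigmaSubtype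
      fun (σ : Perm (Fin n)) (g : Fin n → α) => g ∘ σ = φ ∘ g),
    Nat.card_congr (compPermEqEquiv φ), Nat.card_prod, Nat.card_perm, Nat.card_fin]

/-- The two-row array with rows `a` and `b`, ordered lexicographically by columns. -/
def biword (a b : Fin n → α) (i : Fin n) : α ×ₗ α := toLex (a i, b i)

/-- The exchange of the two letters of a column of a biword. -/
def columnSwap (c : α ×ₗ α) : α ×ₗ α := toLex (ofLex c).swap

/-- A word `w` fixed by `σ ^ 2` is the top row of a unique biword whose rows are exchanged by `σ`,
namely of the one with bottom row `w ∘ σ`. -/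
def invariantSqEquiv (σ : Perm (Fin n)) :
    {w : Fin n → α // w ∘ (σ ^ 2 : Perm (Fin n)) = w} ≃
      {g : Fin n → α ×ₗ α // g ∘ σ = columnSwap ∘ g} where
  toFun w := ⟨biword w.1 (w.1 ∘ σ), congrArg (biword _) w.2⟩
  invFun g := ⟨fun i => (ofLex (g.1 i)).1, by
    funext i
    have hi := congrFun g.2 i
    have hσi := congrFun g.2 (σ i)
    simp only [Function.comp_apply, columnSwap] at hi hσi
    simp [sq, hi, hσi]⟩
  left_inv _ := rfl
  right_inv g := by
    refine Subtype.ext (funext fun i => ?_)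
    have hi := congrArg (fun c => (ofLex c).1) (congrFun g.2 i)
    exact congrArg (fun x => toLex ((ofLex (g.1 i)).1, x)) hi

theorem monotone_biword_iff {a b : Fin n → α} :
    Monotone (biword a b) ↔ Monotone a ∧ ∀ i j, i < j → a i = a j → b i ≤ b j := by
  constructor
  · intro h
    refine ⟨fun i j hij => Prod.Lex.monotone_fst _ _ (h hij), fun i j hij hab => ?_⟩
    exact ((Prod.Lex.toLex_le_toLex.1 (h hij.le)).resolve_left hab.not_lt).2
  · rintro ⟨ha, hb⟩
    refine monotone_iff_forall_lt.2 fun i j hij => Prod.Lex.toLex_le_toLex.2 ?_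
    exact (ha hij.le).lt_or_eq.imp_right fun h => ⟨h, hb i j hij h⟩

theorem sort_lt_sort {b : Fin n → α} {i j : Fin n} (hij : i < j)
    (h : b (sort b i) = b (sort b j)) : sort b i < sort b j :=
  (Tuple.eq_sort_iff.1 rfl).2 i j hij h

theorem lt_of_sort_lt_sort {b : Fin n → α} {i j : Fin n} (hij : sort b i < sort b j)
    (h : b (sort b i) ≤ b (sort b j)) : i < j := by
  by_contra! hle
  have hji : j < i := hle.lt_of_ne (ne_of_apply_ne (sort b) hij.ne')
  exact hij.asymm (sort_lt_sort hji ((Tuple.monotone_sort b hle).antisymm h))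

theorem sort_biword_swap {a b : Fin n → α} (h : Monotone (biword a b)) :
    sort (biword b a) = sort b := by
  have hsort : Monotone (biword b a ∘ sort b) := monotone_biword_iff.2
    ⟨Tuple.monotone_sort b, fun i j hij hb =>
      (monotone_biword_iff.1 h).1 (sort_lt_sort hij hb).le⟩
  refine (Tuple.eq_sort_iff.2 ⟨hsort, fun i j hij hba => ?_⟩).symm
  exact sort_lt_sort hij (congrArg (fun c => (ofLex c).1) hba)

theorem sort_comp_sort {a b : Fin n → α} (h : Monotone (biword a b)) :
    sort (a ∘ sort b) = (sort b)⁻¹ := by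
  obtain ⟨ha, hb⟩ := monotone_biword_iff.1 h
  refine (Tuple.eq_sort_iff.2 ⟨?_, fun i j hij hab => ?_⟩).symm
  · simpa [Function.comp_def] using ha
  · exact lt_of_sort_lt_sort (b := b) (by simpa using hij)
      (by simpa using hb i j hij (by simpa using hab))

theorem biword_swap_comp_sort_eq_iff {a b : Fin n → α} :
    biword b a ∘ sort (biword b a) = biword a b ↔ sort b ^ 2 = 1 ∧ a = b ∘ sort b := by
  constructor
  · intro h
    have hab : Monotone (biword a b) := h ▸ Tuple.monotone_sort _
    rw [sort_biword_swap hab] at h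
    have hb : b ∘ sort b = a := funext fun i => congrArg (fun c => (ofLex c).1) (congrFun h i)
    have ha : a ∘ sort b = b := funext fun i => congrArg (fun c => (ofLex c).2) (congrFun h i)
    refine ⟨?_, hb.symm⟩
    rw [sq, mul_eq_one_iff_eq_inv, ← sort_comp_sort hab, ha]
  · rintro ⟨hsq, rfl⟩
    have sort_sort (i) : sort b (sort b i) = i := by
      rw [← Equiv.Perm.mul_apply, ← sq, hsq, Equiv.Perm.one_apply]
    have hab : Monotone (biword (b ∘ sort b) b) := monotone_biword_iff.2
      ⟨Tuple.monotone_sort b, fun i j hij h => by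
        simpa [sort_sort] using Tuple.monotone_sort b (sort_lt_sort hij h).le⟩
    rw [sort_biword_swap hab]
    funext i
    simp [biword, sort_sort]

/-- A biword that is fixed by swapping its rows and sorting its columns is determined by its bottom
row, which can be any word sorted by an involution. -/
def symmetricBiwordEquiv :
    {g : Fin n → α ×ₗ α // (columnSwap ∘ g) ∘ sort (columnSwap ∘ g) = g} ≃
      {h : Fin n → α // sort h ^ 2 = 1} where
  toFun g := ⟨fun i => (ofLex (g.1 i)).2, (biword_swap_comp_sort_eq_iff.1 g.2).1⟩
  invFun h := ⟨biword (h.1 ∘ sort h.1) h.1, biword_swap_comp_sort_eq_iff.2 ⟨h.2, rfl⟩⟩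
  left_inv g := Subtype.ext <| congrArg (biword · _) (biword_swap_comp_sort_eq_iff.1 g.2).2.symm
  right_inv _ := rfl

theorem sum_pow_numCycles_sq_eq_factorial_mul (n r : ℕ) :
    ∑ σ : Perm (Fin n), r ^ numCycles n (σ ^ 2) =
      n.factorial * Nat.card {h : Fin n → Fin r // sort h ^ 2 = 1} := by
  calc ∑ σ : Perm (Fin n), r ^ numCycles n (σ ^ 2)
      = ∑ σ : Perm (Fin n), Nat.card {g : Fin n → Fin r ×ₗ Fin r // g ∘ σ = columnSwap ∘ g} := by
        simp only [← card_invariant_words, Nat.card_congr (invariantSqEquiv _)]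
    _ = n.factorial * Nat.card {h : Fin n → Fin r // sort h ^ 2 = 1} := by
        have : Finite (Fin r ×ₗ Fin r) := inferInstanceAs (Finite (Fin r × Fin r))
        rw [sum_card_comp_perm_eq, Nat.card_congr symmetricBiwordEquiv]

theorem factorial_mul_card_sort_mem_invSet (hn : 1 ≤ n) (r : ℕ) :
    n.factorial * Nat.card {h : Fin n → Fin r // sort h ∈ invSet n} =
      ∑ k ∈ Finset.Icc 1 n, bnk n k * r ^ k := by
  simp only [invSet, Finset.mem_filter_univ, ← sum_pow_numCycles_sq hn,
    sum_pow_numCycles_sq_eq_factorial_mul]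

end Words

section CompatibleWords

variable {n : ℕ}

/-- The words of Stanley's theory of `P`-partitions that are compatible with `π`: weakly increasing,
and strictly increasing at the descents of `π`. -/
def IsCompatible {β : Type*} [Preorder β] (π : Perm (Fin n)) (f : Fin n → β) : Prop :=
  StrictMono fun i => toLex (f i, π i)

theorem isCompatible_val_comp {r : ℕ} {π : Perm (Fin n)} {f : Fin n → Fin r} :
    IsCompatible π (Fin.val ∘ f) ↔ IsCompatible π f := by
  simp only [IsCompatible, StrictMono, Prod.Lex.toLex_lt_toLex, Function.comp_apply,
    Fin.val_fin_lt, Fin.val_inj]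

theorem IsCompatible.monotone {β : Type*} [PartialOrder β] {π : Perm (Fin n)} {f : Fin n → β}
    (h : IsCompatible π f) : Monotone f :=
  fun _ _ hij => Prod.Lex.monotone_fst _ _ (StrictMono.monotone h hij)

theorem sort_eq_iff_isCompatible {β : Type*} [LinearOrder β] {π : Perm (Fin n)} {h : Fin n → β} :
    sort h = π ↔ IsCompatible π (h ∘ π) :=
  eq_comm.trans Tuple.eq_sort_iff'

theorem card_sort_mem {β : Type*} [LinearOrder β] [Finite β] (s : Finset (Perm (Fin n))) :
    Nat.card {h : Fin n → β // sort h ∈ s} =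
      ∑ π ∈ s, Nat.card {f : Fin n → β // IsCompatible π f} := by
  rw [← Nat.card_congr (Equiv.sigmaSubtypeFiberEquivSubtype (sort (α := β)) fun _ => Iff.rfl),
    Nat.card_sigma, ← Finset.sum_coe_sort s]
  refine Finset.sum_congr rfl fun π _ => Nat.card_congr ?_
  exact (π.1.symm.arrowCongr (Equiv.refl β)).subtypeEquiv fun _ => sort_eq_iff_isCompatible

/-- The number of ascents of `π` among its first `i` positions, that is, of those of the positions
`1, …, i` that `des` does not count. -/
def ascBefore (π : Perm (Fin n)) (i : ℕ) : ℕ :=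
  ((Finset.Icc 1 i).filter fun j => ¬oneLine n π (j + 1) < oneLine n π j).card

theorem ascBefore_add_des (π : Perm (Fin n)) : ascBefore π (n - 1) + des n π = n - 1 := by
  rw [ascBefore, des, add_comm, Finset.card_filter_add_card_filter_not, Nat.card_Icc,
    Nat.add_sub_cancel]

theorem ascBefore_mono (π : Perm (Fin n)) : Monotone (ascBefore π) := fun _ _ hij =>
  Finset.card_le_card (Finset.filter_subset_filter _ (Finset.Icc_subset_Icc_right hij))

theorem ascBefore_le (π : Perm (Fin n)) (i : ℕ) : ascBefore π i ≤ i :=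
  (Finset.card_filter_le _ _).trans (by simp)

theorem oneLine_succ (π : Perm (Fin n)) (i : Fin n) : oneLine n π (i + 1) = π i + 1 := by
  simp [oneLine]

variable {m : ℕ}

theorem ascBefore_succ (π : Perm (Fin (m + 1))) (i : Fin m) :
    ascBefore π i.succ = ascBefore π i.castSucc + if π i.castSucc < π i.succ then 1 else 0 := by
  have ascent_iff : ¬oneLine (m + 1) π (i + 1 + 1) < oneLine (m + 1) π (i + 1) ↔
      π i.castSucc < π i.succ := by
    have hne : π i.castSucc ≠ π i.succ := π.injective.ne (Fin.castSucc_lt_succ).ne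
    have h₁ := oneLine_succ π i.castSucc
    have h₂ := oneLine_succ π i.succ
    rw [Fin.val_castSucc] at h₁
    rw [Fin.val_succ] at h₂
    rw [h₁, h₂, Nat.add_lt_add_iff_right, Fin.val_fin_lt, not_lt, hne.le_iff_lt]
  simp only [ascBefore, Finset.card_filter, Fin.val_succ, Fin.val_castSucc]
  rw [Finset.sum_Icc_succ_top (Nat.le_add_left 1 i), if_congr ascent_iff rfl rfl]

theorem isCompatible_iff_strictMono_add_ascBefore {π : Perm (Fin (m + 1))} {f : Fin (m + 1) → ℕ} :
    IsCompatible π f ↔ StrictMono fun i => f i + ascBefore π i := by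
  rw [IsCompatible, Fin.strictMono_iff_lt_succ, Fin.strictMono_iff_lt_succ]
  refine forall_congr' fun i => ?_
  rw [Prod.Lex.toLex_lt_toLex, ascBefore_succ]
  split_ifs with h
  · simp [h, ← le_iff_lt_or_eq, ← add_assoc]
  · simp [h]

theorem val_le_apply_of_strictMono {e : Fin n → ℕ} (he : StrictMono e) :
    ∀ i : Fin n, (i : ℕ) ≤ e i := by
  rintro ⟨i, hi⟩
  induction i with
  | zero => exact Nat.zero_le _
  | succ i ih =>
    exact Nat.succ_le_of_lt ((ih (Nat.lt_of_succ_lt hi)).trans_lt (he (Nat.lt_succ_self i)))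

theorem ascBefore_le_of_strictMono (π : Perm (Fin n)) {e : Fin n → ℕ} (he : StrictMono e)
    (i : Fin n) : ascBefore π i ≤ e i :=
  (ascBefore_le π i).trans (val_le_apply_of_strictMono he i)

theorem isCompatible_sub_ascBefore (π : Perm (Fin (m + 1))) {e : Fin (m + 1) → ℕ}
    (he : StrictMono e) : IsCompatible π fun i => e i - ascBefore π i := by
  rw [isCompatible_iff_strictMono_add_ascBefore]
  simpa only [Nat.sub_add_cancel (ascBefore_le_of_strictMono π he _)] using he

theorem sub_ascBefore_lt (π : Perm (Fin (m + 1))) {e : Fin (m + 1) → ℕ} (he : StrictMono e)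
    {r : ℕ} (hr : e (Fin.last m) < r + ascBefore π m) (i : Fin (m + 1)) :
    e i - ascBefore π i < r :=
  ((isCompatible_sub_ascBefore π he).monotone (Fin.le_last i)).trans_lt
    (Nat.sub_lt_right_of_lt_add (ascBefore_le_of_strictMono π he (Fin.last m)) hr)

/-- Adding the number of preceding ascents to every letter makes a compatible word strictly
increasing. -/
def compatibleEquiv (π : Perm (Fin (m + 1))) (r : ℕ) :
    {f : Fin (m + 1) → Fin r // IsCompatible π f} ≃
      (Fin (m + 1) ↪o Fin (r + ascBefore π m)) where
  toFun f := OrderEmbedding.ofStrictMono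
    (fun i => ⟨f.1 i + ascBefore π i,
      Nat.add_lt_add_of_lt_of_le (f.1 i).2 (ascBefore_mono π (Nat.le_of_lt_succ i.2))⟩)
    (isCompatible_iff_strictMono_add_ascBefore.1 (isCompatible_val_comp.2 f.2))
  invFun e := ⟨fun i => ⟨e i - ascBefore π i, sub_ascBefore_lt π e.strictMono (e _).2 i⟩,
    isCompatible_val_comp.1 (isCompatible_sub_ascBefore π e.strictMono)⟩
  left_inv _ := Subtype.ext <| funext fun _ => Fin.ext (Nat.add_sub_cancel _ _)
  right_inv e := RelEmbedding.ext fun i => Fin.ext <|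
    Nat.sub_add_cancel (ascBefore_le_of_strictMono π e.strictMono i)

theorem card_isCompatible {n : ℕ} (π : Perm (Fin n)) (r : ℕ) :
    Nat.card {f : Fin n → Fin r // IsCompatible π f} = (r + ascBefore π (n - 1)).choose n := by
  rcases n with _ | m
  · simp [IsCompatible, Subsingleton.strictMono]
  rw [Nat.card_congr (compatibleEquiv π r), Nat.card_congr Set.powersetCard.ofFinEmbEquiv,
    Set.powersetCard.card, Nat.card_fin, Nat.add_sub_cancel]

end CompatibleWords

section GeneratingFunctions

theorem mk_add_choose_mul_one_sub_pow {S : Type*} [CommRing S] {n a d : ℕ} (h : a + d + 1 = n) :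
    (PowerSeries.mk fun r => ((r + a).choose n : S)) * (1 - PowerSeries.X) ^ (n + 1) =
      PowerSeries.X ^ (d + 1) := by
  have mk_eq : (PowerSeries.mk fun r => ((r + a).choose n : S)) =
      PowerSeries.X ^ (d + 1) * PowerSeries.mk fun r => ((n + r).choose n : S) := by
    ext r
    rw [PowerSeries.coeff_X_pow_mul', PowerSeries.coeff_mk, PowerSeries.coeff_mk]
    split_ifs with hr
    · congr 2
      omega
    · rw [Nat.choose_eq_zero_of_lt (by omega), Nat.cast_zero]
  rw [mk_eq, mul_assoc, PowerSeries.mk_add_choose_mul_one_sub_pow_eq_one, mul_one]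

theorem coe_polynomial_natCast {R : Type*} [Semiring R] (c : ℕ) : ((c : R[X]) : R⟦X⟧) = c :=
  map_natCast Polynomial.coeToPowerSeries.ringHom c

theorem coe_polynomial_sum {R ι : Type*} [Semiring R] (s : Finset ι) (p : ι → R[X]) :
    ((∑ i ∈ s, p i : R[X]) : R⟦X⟧) = ∑ i ∈ s, (p i : R⟦X⟧) :=
  map_sum (Polynomial.coeToPowerSeries.ringHom (R := R)) p s

theorem coe_sum_X_pow_des {S : Type*} [CommRing S] {n : ℕ} (hn : 1 ≤ n)
    (s : Finset (Perm (Fin n))) :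
    ((∑ π ∈ s, Polynomial.X ^ (des n π + 1) : S[X]) : S⟦X⟧) =
      (PowerSeries.mk fun r => (Nat.card {h : Fin n → Fin r // sort h ∈ s} : S)) *
        (1 - PowerSeries.X) ^ (n + 1) := by
  have mk_eq : (PowerSeries.mk fun r => (Nat.card {h : Fin n → Fin r // sort h ∈ s} : S)) =
      ∑ π ∈ s, PowerSeries.mk fun r => ((r + ascBefore π (n - 1)).choose n : S) := by
    ext r
    rw [PowerSeries.coeff_mk, card_sort_mem, Nat.cast_sum, map_sum]
    simp only [card_isCompatible, PowerSeries.coeff_mk]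
  rw [mk_eq, Finset.sum_mul, coe_polynomial_sum]
  refine Finset.sum_congr rfl fun π _ => ?_
  have hdes : ascBefore π (n - 1) + des n π + 1 = n := by
    rw [ascBefore_add_des, Nat.sub_add_cancel hn]
  rw [mk_add_choose_mul_one_sub_pow hdes, Polynomial.coe_pow, Polynomial.coe_X]

theorem coe_eulerianA_mul_one_sub_pow {n k : ℕ} (hk : 1 ≤ k) (hkn : k ≤ n) :
    ((eulerianA k * (1 - Polynomial.X) ^ (n - k) : ℚ[X]) : ℚ⟦X⟧) =
      (PowerSeries.mk fun r => (r : ℚ) ^ k) * (1 - PowerSeries.X) ^ (n + 1) := by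
  have coe_eulerianA : (eulerianA k : ℚ⟦X⟧) =
      (PowerSeries.mk fun r => (r : ℚ) ^ k) * (1 - PowerSeries.X) ^ (k + 1) := by
    simp [eulerianA, coe_sum_X_pow_des hk]
  rw [Polynomial.coe_mul, coe_eulerianA, Polynomial.coe_pow, Polynomial.coe_sub,
    Polynomial.coe_one, Polynomial.coe_X, mul_assoc, ← pow_add]
  congr 2
  omega

theorem factorial_mul_mk_card_sort_mem_invSet {n : ℕ} (hn : 1 ≤ n) :
    (n.factorial : ℚ⟦X⟧) *
        (PowerSeries.mk fun r => (Nat.card {h : Fin n → Fin r // sort h ∈ invSet n} : ℚ)) =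
      ∑ k ∈ Finset.Icc 1 n, (bnk n k : ℚ⟦X⟧) * PowerSeries.mk fun r => (r : ℚ) ^ k := by
  ext r
  simp only [← nsmul_eq_mul, map_sum, map_nsmul, PowerSeries.coeff_mk]
  simp only [nsmul_eq_mul]
  exact_mod_cast factorial_mul_card_sort_mem_invSet hn r

end GeneratingFunctions

theorem stmt11 (n : ℕ) (hn : 1 ≤ n) :
    (n.factorial : Polynomial ℚ) * ∑ π ∈ invSet n, Polynomial.X ^ (des n π + 1)
      = ∑ k ∈ Finset.Icc 1 n,
          (bnk n k : Polynomial ℚ) * eulerianA k * (1 - Polynomial.X) ^ (n - k) := by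
  apply Polynomial.coe_injective ℚ
  rw [Polynomial.coe_mul, coe_polynomial_natCast, coe_sum_X_pow_des hn, ← mul_assoc,
    factorial_mul_mk_card_sort_mem_invSet hn, Finset.sum_mul, coe_polynomial_sum]
  refine Finset.sum_congr rfl fun k hk => ?_
  obtain ⟨hk₁, hkn⟩ := Finset.mem_Icc.1 hk
  rw [mul_assoc, mul_assoc, Polynomial.coe_mul, coe_polynomial_natCast,
    coe_eulerianA_mul_one_sub_pow hk₁ hkn]

end
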